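/- arXiv:2302.13927 — 6 statements merged into one kernel-verified Lean document; each statement's English description precedes it below -/
import Mathlib

section
/- The vector π on {(0,0),(0,1),(1,0),(1,1)} given by π(0,0) = π(1,1) = (p + (1−p)a)/(4p + 2a − 4pa) and π(0,1) = π(1,0) = p(1−a)/(4p + 2a − 4pa) has nonnegative entries, sums to 1, and is an invariant (stationary) distribution of the joint source–reconstruction chain M, i.e. πM = π. (This is the paper's Lemma 2 with a = p_α·p_s.) -/
/-! Up to normalization the stationary law is `a • I + p (1 - a) • J`, with `J` the all-ones matrix,
and the symmetric source on `N` states is `(1 - N p) • I + p • J`. One step of the joint chain maps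
combinations of `I` and `J` to such combinations, so invariance amounts to two scalar identities,
whatever the number of states. -/

open Matrix

section JointChain

variable {α R : Type*} [Fintype α] [DecidableEq α] [CommRing R]

/-- The joint source–reconstruction chain of a source with transition matrix `P` under the
randomized stationary policy. A state is a pair (source, reconstruction); `a` is the probability
that the reconstruction is updated to the new source state rather than kept. -/
def jointKernel (P : Matrix α α R) (a : R) : Matrix (α × α) (α × α) R :=
  fun s t ↦ P s.1 t.1 * (a * (if t.2 = t.1 then 1 else 0) + (1 - a) * (if t.2 = s.2 then 1 else 0))

lemma vecMul_jointKernel_apply (P : Matrix α α R) (a : R) (ν : α × α → R) (y z : α) :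
    (ν ᵥ* jointKernel P a) (y, z) =
      (if z = y then a * ((fun x ↦ ∑ w, ν (x, w)) ᵥ* P) y else 0) +
        (1 - a) * ((fun x ↦ ν (x, z)) ᵥ* P) y := by
  have update : (∑ x, ∑ w, ν (x, w) * (P x y * (a * if z = y then 1 else 0))) =
      if z = y then a * ∑ x, (∑ w, ν (x, w)) * P x y else 0 := by
    split_ifs
    · simp only [Finset.mul_sum, Finset.sum_mul]
      exact Finset.sum_congr rfl fun x _ ↦ Finset.sum_congr rfl fun w _ ↦ by ring
    · simp only [mul_zero, Finset.sum_const_zero]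
  have keep : (∑ x, ∑ w, ν (x, w) * (P x y * ((1 - a) * if z = w then 1 else 0))) =
      (1 - a) * ∑ x, ν (x, z) * P x y := by
    simp only [mul_ite, mul_one, mul_zero, Finset.sum_ite_eq, Finset.mem_univ, if_true,
      Finset.mul_sum]
    exact Finset.sum_congr rfl fun x _ ↦ by ring
  simp only [vecMul, dotProduct, jointKernel, Fintype.sum_prod_type]
  rw [← update, ← keep]
  simp only [mul_add, Finset.sum_add_distrib]

end JointChain

section SymmetricSource

variable {α R : Type*} [Fintype α] [DecidableEq α] [CommRing R]

/-- The transition matrix of the symmetric source on `α`, which moves to each other state with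
probability `p`. -/
def symmetricKernel (p : R) : Matrix α α R :=
  fun x y ↦ if x = y then 1 - (Fintype.card α - 1) * p else p

lemma vecMul_symmetricKernel_apply (p : R) (μ : α → R) (y : α) :
    (μ ᵥ* symmetricKernel p) y = (1 - Fintype.card α * p) * μ y + p * ∑ x, μ x := by
  have entry (x : α) :
      symmetricKernel p x y = (if x = y then 1 - Fintype.card α * p else 0) + p := by
    unfold symmetricKernel
    split_ifs <;> ring
  simp only [vecMul, dotProduct, entry, mul_add, mul_ite, mul_zero, Finset.sum_add_distrib,
    Finset.sum_ite_eq', Finset.mem_univ, if_true, ← Finset.sum_mul]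
  ring

/-- The unnormalized stationary law of the joint chain of the symmetric source, in a form free of
division. -/
def symmetricWeight (p a : R) : α × α → R :=
  fun s ↦ (if s.1 = s.2 then a else 0) + p * (1 - a)

lemma sum_symmetricWeight_left (p a : R) (z : α) :
    ∑ x, symmetricWeight p a (x, z) = a + Fintype.card α * (p * (1 - a)) := by
  simp [symmetricWeight, Finset.sum_add_distrib]

lemma sum_symmetricWeight_right (p a : R) (x : α) :
    ∑ z, symmetricWeight p a (x, z) = a + Fintype.card α * (p * (1 - a)) := by
  simp [symmetricWeight, Finset.sum_add_distrib]

lemma sum_symmetricWeight (p a : R) :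
    ∑ s : α × α, symmetricWeight p a s =
      Fintype.card α * (a + Fintype.card α * (p * (1 - a))) := by
  simp only [Fintype.sum_prod_type, sum_symmetricWeight_right, Finset.sum_const, Finset.card_univ,
    nsmul_eq_mul]

theorem symmetricWeight_vecMul_jointKernel (p a : R) :
    symmetricWeight p a ᵥ* jointKernel (symmetricKernel (α := α) p) a = symmetricWeight p a := by
  ext ⟨y, z⟩
  simp only [vecMul_jointKernel_apply, vecMul_symmetricKernel_apply, sum_symmetricWeight_left,
    sum_symmetricWeight_right, Finset.sum_const, Finset.card_univ, nsmul_eq_mul]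
  simp only [symmetricWeight, eq_comm (a := z)]
  split_ifs <;> ring

end SymmetricSource

section Positivity

variable {α R : Type*} [DecidableEq α] [CommRing R] [PartialOrder R] [IsStrictOrderedRing R]

lemma symmetricWeight_nonneg {p a : R} (hp : 0 ≤ p) (ha : 0 ≤ a) (ha' : a ≤ 1) (s : α × α) :
    0 ≤ symmetricWeight p a s :=
  add_nonneg (ite_nonneg ha le_rfl) (mul_nonneg hp (sub_nonneg.2 ha'))

lemma sum_symmetricWeight_pos [Fintype α] [Nonempty α] {p a : R} (hp : 0 < p) (ha : 0 ≤ a)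
    (ha' : a ≤ 1) :
    0 < ∑ s : α × α, symmetricWeight p a s := by
  have card_pos : (0 : R) < Fintype.card α := Nat.cast_pos.2 Fintype.card_pos
  rw [sum_symmetricWeight]
  refine mul_pos card_pos ?_
  rcases ha.eq_or_lt with rfl | ha
  · simpa using mul_pos card_pos hp
  · exact add_pos_of_pos_of_nonneg ha
      (mul_nonneg card_pos.le (mul_nonneg hp.le (sub_nonneg.2 ha')))

end Positivity

section StationaryDistribution

variable {α ι 𝕜 : Type*} [Fintype α] [DecidableEq α] [Fintype ι]
  [Field 𝕜] [LinearOrder 𝕜] [IsStrictOrderedRing 𝕜]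

lemma inv_sum_smul_mem_stdSimplex {w : ι → 𝕜} (hw : ∀ i, 0 ≤ w i) (hsum : 0 < ∑ i, w i) :
    (∑ i, w i)⁻¹ • w ∈ stdSimplex 𝕜 ι := by
  refine ⟨fun i ↦ mul_nonneg (inv_nonneg.2 hsum.le) (hw i), ?_⟩
  simp only [Pi.smul_apply, smul_eq_mul, ← Finset.mul_sum]
  exact inv_mul_cancel₀ hsum.ne'

/-- The stationary distribution of the joint chain of the symmetric source, obtained by normalizing
`symmetricWeight`. The inverse is the junk value `0` when the total weight vanishes. -/
def symmetricStationary (p a : 𝕜) : α × α → 𝕜 :=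
  (∑ s : α × α, symmetricWeight p a s)⁻¹ • symmetricWeight p a

theorem stmt_1_general [Nonempty α] {p a : 𝕜} (hp : 0 < p) (ha : 0 ≤ a) (ha' : a ≤ 1) :
    symmetricStationary p a ∈ stdSimplex 𝕜 (α × α) ∧
      symmetricStationary p a ᵥ* jointKernel (symmetricKernel (α := α) p) a =
        symmetricStationary p a :=
  ⟨inv_sum_smul_mem_stdSimplex (symmetricWeight_nonneg hp.le ha ha')
      (sum_symmetricWeight_pos hp ha ha'),
    by rw [symmetricStationary, smul_vecMul, symmetricWeight_vecMul_jointKernel]⟩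

end StationaryDistribution

lemma symmetricStationary_fin_two_apply (p a : ℝ) (x z : Fin 2) :
    symmetricStationary p a (x, z) =
      (if x = z then p + (1 - p) * a else p * (1 - a)) / (4 * p + 2 * a - 4 * p * a) := by
  have total : ∑ s : Fin 2 × Fin 2, symmetricWeight p a s = 4 * p + 2 * a - 4 * p * a := by
    rw [sum_symmetricWeight, Fintype.card_fin]
    push_cast
    ring
  rw [symmetricStationary, total, Pi.smul_apply, smul_eq_mul, inv_mul_eq_div, symmetricWeight]
  congr 1
  split_ifs <;> ring

/-- Lemma 2 of the paper: the stationary distribution of the joint source–reconstruction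
chain for the two-state symmetric DTMC source under the randomized stationary policy. -/
theorem stmt_1 (p a : ℝ) (hp : 0 < p) (hp' : p < 1) (ha : 0 ≤ a) (ha' : a ≤ 1)
    (P : Fin 2 → Fin 2 → ℝ)
    (hP : ∀ x y, P x y = if x = y then 1 - p else p)
    (M : (Fin 2 × Fin 2) → (Fin 2 × Fin 2) → ℝ)
    (hM : ∀ s t, M s t =
      P s.1 t.1 * (a * (if t.2 = t.1 then 1 else 0) + (1 - a) * (if t.2 = s.2 then 1 else 0)))
    (pi : Fin 2 × Fin 2 → ℝ)
    (hpi00 : pi (0, 0) = (p + (1 - p) * a) / (4 * p + 2 * a - 4 * p * a))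
    (hpi01 : pi (0, 1) = p * (1 - a) / (4 * p + 2 * a - 4 * p * a))
    (hpi10 : pi (1, 0) = p * (1 - a) / (4 * p + 2 * a - 4 * p * a))
    (hpi11 : pi (1, 1) = (p + (1 - p) * a) / (4 * p + 2 * a - 4 * p * a)) :
    (∀ s, 0 ≤ pi s) ∧ (∑ s : Fin 2 × Fin 2, pi s = 1) ∧
      (∀ t, ∑ s : Fin 2 × Fin 2, pi s * M s t = pi t) := by
  obtain rfl : P = symmetricKernel p := by
    ext x y
    norm_num [hP, symmetricKernel]
  obtain rfl : M = jointKernel (symmetricKernel p) a := by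
    ext s t
    exact hM s t
  obtain rfl : pi = symmetricStationary p a := by
    ext ⟨x, z⟩
    fin_cases x <;> fin_cases z <;> simp [symmetricStationary_fin_two_apply, *]
  obtain ⟨⟨nonneg, sum_eq_one⟩, invariant⟩ := stmt_1_general (α := Fin 2) hp ha ha'
  exact ⟨nonneg, sum_eq_one, congrFun invariant⟩
end

section
/- The function g(x) = 2p(1 − x·p_s)/(4p + 2x·p_s − 4p·x·p_s) is strictly decreasing on [0,1]; consequently g(x) ≤ g(0) = 1/2 with strict inequality for x > 0, and for every η ∈ (0,1] the minimum of g over [0,η] is attained at x = η with minimum value g(η) = 2p(1 − η·p_s)/(4p + 2η·p_s − 4p·η·p_s). (This is the paper's Lemma 4: the constrained optimum of the randomized stationary sampling probability is p*_α = η, with optimal error P*_E = g(η).) -/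
/-!
In `u = x * ps` the error `g` is a linear fractional function. Its denominator is twice the convex
combination `(1 - u) * (2 * p) + u * 1` of positive numbers, and its determinant in `x` is
`-4 * p * ps < 0`, so `g` is strictly decreasing; everything else is read off from that.
-/

section

open Set

variable {K : Type*} [Field K]

/-- The time-averaged reconstruction error `g x` of a two-state symmetric Markov source with
transition probability `p`, sampled with probability `x` over a channel with success probability
`ps`. The formula makes sense over any field, so the parameters are not bundled as probabilities. -/
def reconstructionError (p ps x : K) : K :=
  2 * p * (1 - x * ps) / (4 * p + 2 * x * ps - 4 * p * x * ps)

theorem reconstructionError_zero [NeZero (2 : K)] {p : K} (hp : p ≠ 0) (ps : K) :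
    reconstructionError p ps 0 = 1 / 2 := by
  have hdenom : 4 * p = 2 * (2 * p) := by ring
  have htwo_mul : 2 * p ≠ 0 := mul_ne_zero two_ne_zero hp
  simp only [reconstructionError, zero_mul, mul_zero, sub_zero, add_zero, mul_one]
  rw [hdenom, div_mul_cancel_right₀ htwo_mul, one_div]

variable [LinearOrder K] [IsStrictOrderedRing K]

theorem strictAntiOn_linearFractional {a b c d : K} (hdet : b * c < a * d) :
    StrictAntiOn (fun x ↦ (a + b * x) / (c + d * x)) {x | 0 < c + d * x} := by
  intro x hx y hy hxy
  have hcross : (a + b * x) * (c + d * y) - (a + b * y) * (c + d * x) =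
      (a * d - b * c) * (y - x) := by ring
  have hpos : 0 < (a * d - b * c) * (y - x) := mul_pos (sub_pos.2 hdet) (sub_pos.2 hxy)
  exact (div_lt_div_iff₀ hy hx).2 (sub_pos.1 (hcross ▸ hpos))

theorem reconstructionError_denom_pos {p ps x : K} (hp : 0 < p) (hu : x * ps ∈ Icc 0 1) :
    0 < 4 * p + 2 * x * ps - 4 * p * x * ps := by
  have hconvex : 0 < (1 - x * ps) * (4 * p) + x * ps * 2 :=
    convex_Ioi (0 : K) (mul_pos four_pos hp) two_pos (sub_nonneg.2 hu.2) hu.1 (sub_add_cancel 1 _)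
  linear_combination hconvex

theorem strictAntiOn_reconstructionError {p ps : K} (hp : 0 < p) (hps : 0 < ps) :
    StrictAntiOn (reconstructionError p ps) {x | x * ps ∈ Icc 0 1} := by
  have hdet : -(2 * p * ps) * (4 * p) < 2 * p * (2 * ps - 4 * p * ps) := by
    linear_combination 4 * mul_pos hp hps
  have hform : reconstructionError p ps =
      fun x ↦ (2 * p + -(2 * p * ps) * x) / (4 * p + (2 * ps - 4 * p * ps) * x) := by
    funext x
    unfold reconstructionError
    congr 1 <;> ring
  rw [hform]
  refine (strictAntiOn_linearFractional hdet).mono fun x hx ↦ ?_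
  have hdenom := reconstructionError_denom_pos hp hx
  change 0 < 4 * p + (2 * ps - 4 * p * ps) * x
  linear_combination hdenom

theorem stmt_8_general {p ps : K} (hp : 0 < p) (hps : 0 < ps) (hps' : ps ≤ 1) {g : K → K}
    (hg : ∀ x, g x = 2 * p * (1 - x * ps) / (4 * p + 2 * x * ps - 4 * p * x * ps)) :
    StrictAntiOn g (Icc 0 1) ∧ g 0 = 1 / 2 ∧
      (∀ x ∈ Icc (0 : K) 1, g x ≤ 1 / 2 ∧ (0 < x → g x < 1 / 2)) ∧
      (∀ η ∈ Ioc (0 : K) 1, (∀ x ∈ Icc (0 : K) η, g η ≤ g x) ∧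
        g η = 2 * p * (1 - η * ps) / (4 * p + 2 * η * ps - 4 * p * η * ps)) := by
  obtain rfl : g = reconstructionError p ps := funext hg
  have hanti : StrictAntiOn (reconstructionError p ps) (Icc 0 1) :=
    (strictAntiOn_reconstructionError hp hps).mono fun x hx ↦
      ⟨mul_nonneg hx.1 hps.le, mul_le_one₀ hx.2 hps.le hps'⟩
  have hzero := reconstructionError_zero hp.ne' ps
  have zero_mem : (0 : K) ∈ Icc 0 1 := left_mem_Icc.2 zero_le_one
  refine ⟨hanti, hzero, fun x hx ↦ ?_, fun η hη ↦ ⟨fun x hx ↦ ?_, hg η⟩⟩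
  · rw [← hzero]
    exact ⟨hanti.antitoneOn zero_mem hx hx.1, hanti zero_mem hx⟩
  · exact hanti.antitoneOn ⟨hx.1, hx.2.trans hη.2⟩ ⟨hη.1.le, hη.2⟩ hx.2

end

/-- Lemma 4 of the paper: the time-averaged reconstruction error of the two-state DTMC
source under the randomized stationary policy is strictly decreasing in the sampling
probability, is at most 1/2 (strictly below 1/2 for positive sampling probability), and
under the sampling-cost constraint x ≤ η its minimum over [0, η] is attained at x = η. -/
theorem stmt_8 (p ps : ℝ) (hp : 0 < p) (hp' : p < 1) (hps : 0 < ps) (hps' : ps ≤ 1)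
    (g : ℝ → ℝ)
    (hg : ∀ x, g x = 2 * p * (1 - x * ps) / (4 * p + 2 * x * ps - 4 * p * x * ps)) :
    StrictAntiOn g (Set.Icc 0 1) ∧ g 0 = 1 / 2 ∧
      (∀ x ∈ Set.Icc (0 : ℝ) 1, g x ≤ 1 / 2 ∧ (0 < x → g x < 1 / 2)) ∧
      (∀ η ∈ Set.Ioc (0 : ℝ) 1, (∀ x ∈ Set.Icc (0 : ℝ) η, g η ≤ g x) ∧
        g η = 2 * p * (1 - η * ps) / (4 * p + 2 * η * ps - 4 * p * η * ps)) := by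
  exact stmt_8_general hp hps hps' hg
end

section
/- The function h(x) = 2pq(1 − x·p_s)/( (p+q)·[p + q + x·p_s·(1 − p − q)] ) is strictly decreasing on [0,1]. -/
/-!
In the variable `u = x * ps` and with `r = p + q`, the error is the positive constant
`2 * p * q / r` times the linear fractional map `u ↦ (1 - u) / (r + u * (1 - r))`. Its determinant
is `-1`, and on `[0, 1]` its denominator is a convex combination of `r` and `1`, hence positive.
-/

section LinearOrderedField

variable {K : Type*} [Field K] [LinearOrder K] [IsStrictOrderedRing K]

theorem strictAntiOn_linear_fractional_of_det_neg {a b c d : K} (hdet : a * d - b * c < 0) :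
    StrictAntiOn (fun x ↦ (a * x + b) / (c * x + d)) {x | 0 < c * x + d} := by
  intro x hx y hy hxy
  have hcross : (a * x + b) * (c * y + d) - (a * y + b) * (c * x + d) =
      -(a * d - b * c) * (y - x) := by ring
  have hpos : 0 < -(a * d - b * c) * (y - x) := mul_pos (neg_pos.2 hdet) (sub_pos.2 hxy)
  exact (div_lt_div_iff₀ hy hx).2 (sub_pos.1 (hcross ▸ hpos))

theorem add_mul_one_sub_pos {r u : K} (hr : 0 < r) (hu : u ∈ Set.Icc 0 1) :
    0 < r + u * (1 - r) :=
  (convex_Ioi (𝕜 := K) 0).add_smul_sub_mem hr one_pos hu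

theorem strictAntiOn_one_sub_div_add_mul_one_sub {r : K} (hr : 0 < r) :
    StrictAntiOn (fun u ↦ (1 - u) / (r + u * (1 - r))) (Set.Icc 0 1) := by
  have hdet : -1 * r - 1 * (1 - r) < 0 := by
    calc
      -1 * r - 1 * (1 - r) = -1 := by ring
      _ < 0 := neg_one_lt_zero
  have hden (u : K) : (1 - r) * u + r = r + u * (1 - r) := by ring
  have hsub : Set.Icc 0 1 ⊆ {u | 0 < (1 - r) * u + r} := fun u hu ↦
    (add_mul_one_sub_pos hr hu).trans_eq (hden u).symm
  refine ((strictAntiOn_linear_fractional_of_det_neg hdet).mono hsub).congr fun u _ ↦ ?_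
  simp only [hden, neg_one_mul, neg_add_eq_sub]

theorem stmt_9_general {p q ps : K} (hp : 0 < p) (hq : 0 < q) (hps : 0 < ps) :
    StrictAntiOn
      (fun x ↦ 2 * p * q * (1 - x * ps) / ((p + q) * (p + q + x * ps * (1 - p - q))))
      (Set.Icc 0 (1 / ps)) := by
  have hr : 0 < p + q := add_pos hp hq
  have hconst : 0 < 2 * p * q / (p + q) := by positivity
  have hmem {x : K} (hx : x ∈ Set.Icc 0 (1 / ps)) : x * ps ∈ Set.Icc 0 1 :=
    ⟨mul_nonneg hx.1 hps.le, (le_div_iff₀ hps).1 hx.2⟩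
  intro x hx y hy hxy
  simp only [mul_div_mul_comm, sub_sub]
  exact mul_lt_mul_of_pos_left (strictAntiOn_one_sub_div_add_mul_one_sub hr (hmem hx) (hmem hy)
    (mul_lt_mul_of_pos_right hxy hps)) hconst

end LinearOrderedField

/-- The time-averaged reconstruction error of the two-state Birth-Death source under the
randomized stationary policy is strictly decreasing in the sampling probability on [0,1]. -/
theorem stmt_9 (p q ps : ℝ) (hp : 0 < p) (hp' : p < 1) (hq : 0 < q) (hq' : q < 1)
    (hps : 0 < ps) (hps' : ps ≤ 1)
    (h : ℝ → ℝ)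
    (hh : ∀ x, h x =
      2 * p * q * (1 - x * ps) / ((p + q) * (p + q + x * ps * (1 - p - q)))) :
    StrictAntiOn h (Set.Icc 0 1) := by
  rw [funext hh]
  exact (stmt_9_general hp hq hps).mono (Set.Icc_subset_Icc_right ((one_le_div hps).2 hps'))
end

section
/- For every x ∈ [0,1], the inequality f(x) ≤ 2(1 − p_s)/(3 − p_s) holds if and only if x ≥ 2p/(1 − p_s(1 − 2p)), i.e. the randomized stationary policy with sampling probability p_α has time-averaged reconstruction error at most that of the change-aware policy if and only if p_α ≥ 2p/(1 − p_s(1−2p)). (This is the second claim of the paper's Remark 1; note 1 − p_s(1−2p) = 1 − p_s + 2p·p_s > 0.) -/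
/-!
For a symmetric source with `N` states, write `c = (N - 1) * p` for the probability that the source
changes state. Under either policy the synced/erroneous status is a two-state Markov chain, so the
error is a ratio of linear expressions in the sampling probability `x`. After clearing denominators,
the terms of the difference of the two errors that do not contain `ps` cancel, leaving a positive
multiple of `x * (1 - ps * (1 - c)) - c`; its sign gives the threshold.
-/

section

variable {K : Type*} [Field K]

/-- Time-averaged reconstruction error of the randomized stationary policy for the symmetric source
with `N` states, moving to each other state with probability `p`, when a sample is taken and
delivered with probability `y` per slot. It is `a / (a + b)`, where `a = (N - 1) * p * (1 - y)` is
the probability of losing synchronization and `b = y + (1 - y) * p` that of regaining it. The number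
of states is encoded as an element of the field. -/
def randomizedStationaryError (N p y : K) : K :=
  (N - 1) * p * (1 - y) / (N * p + y * (1 - N * p))

/-- Time-averaged reconstruction error of the change-aware policy for the symmetric source with `N`
states and delivery probability `ps`. It is `a / (a + b)`, where `a = (N - 1) * p * (1 - ps)` is the
probability of losing synchronization and `b = p + (N - 2) * p * ps` that of regaining it, so the
transition probability `p` cancels. -/
def changeAwareError (N ps : K) : K :=
  (N - 1) * (1 - ps) / (N - ps)

lemma changeAwareError_sub_randomizedStationaryError {N p ps x : K} (hca : N - ps ≠ 0)
    (hrs : N * p + x * ps * (1 - N * p) ≠ 0) :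
    changeAwareError N ps - randomizedStationaryError N p (x * ps) =
      (N - 1) * ps / ((N - ps) * (N * p + x * ps * (1 - N * p))) *
        (x * (1 - ps * (1 - (N - 1) * p)) - (N - 1) * p) := by
  rw [changeAwareError, randomizedStationaryError, div_sub_div _ _ hca hrs, div_mul_eq_mul_div]
  congr 1
  ring

end

lemma one_sub_mul_one_sub_pos {R : Type*} [CommRing R] [LinearOrder R] [IsStrictOrderedRing R]
    {c t : R} (hc : 0 < c) (ht : t ∈ Set.Icc 0 1) : 0 < 1 - t * (1 - c) := by
  have hconv : 0 < (1 - t) • (1 : R) + t • c :=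
    convex_Ioi (0 : R) one_pos hc (sub_nonneg.2 ht.2) ht.1 (sub_add_cancel 1 t)
  calc
    0 < (1 - t) • (1 : R) + t • c := hconv
    _ = 1 - t * (1 - c) := by simp only [smul_eq_mul]; ring

theorem stmt_12_general {K : Type*} [Field K] [LinearOrder K] [IsStrictOrderedRing K]
    {N p ps x : K} (hN : 1 < N) (hp : 0 < p) (hps : 0 < ps) (hps' : ps ≤ 1)
    (hx : x ∈ Set.Icc 0 1) :
    randomizedStationaryError N p (x * ps) ≤ changeAwareError N ps ↔
      (N - 1) * p / (1 - ps * (1 - (N - 1) * p)) ≤ x := by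
  have hN₁ : 0 < N - 1 := sub_pos.2 hN
  have hca : 0 < N - ps := sub_pos.2 (hps'.trans_lt hN)
  have hthreshold : 0 < 1 - ps * (1 - (N - 1) * p) :=
    one_sub_mul_one_sub_pos (mul_pos hN₁ hp) ⟨hps.le, hps'⟩
  have hrs : 0 < N * p + x * ps * (1 - N * p) := by
    have hy : x * ps ∈ Set.Icc 0 1 :=
      ⟨mul_nonneg hx.1 hps.le, mul_le_one₀ hx.2 hps.le hps'⟩
    have hcomb := one_sub_mul_one_sub_pos (mul_pos (one_pos.trans hN) hp)
      (Set.Icc.one_sub_mem hy)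
    linarith
  have hfactor : 0 < (N - 1) * ps / ((N - ps) * (N * p + x * ps * (1 - N * p))) := by
    positivity
  rw [← sub_nonneg, changeAwareError_sub_randomizedStationaryError hca.ne' hrs.ne',
    mul_nonneg_iff_of_pos_left hfactor, sub_nonneg, div_le_iff₀ hthreshold]

/-- Second claim of Remark 1 of the paper: for the three-state symmetric DTMC source, the
randomized stationary policy with sampling probability x has time-averaged reconstruction
error at most that of the change-aware policy iff x ≥ 2p/(1 − p_s(1 − 2p)). -/
theorem stmt_12 (p ps : ℝ) (hp : 0 < p) (hp' : p ≤ 1 / 2) (hps : 0 < ps) (hps' : ps ≤ 1)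
    (f : ℝ → ℝ)
    (hf : ∀ x, f x = 2 * p * (1 - x * ps) / (3 * p + x * ps * (1 - 3 * p))) :
    ∀ x ∈ Set.Icc (0 : ℝ) 1,
      (f x ≤ 2 * (1 - ps) / (3 - ps) ↔ 2 * p / (1 - ps * (1 - 2 * p)) ≤ x) := by
  intro x hx
  simpa only [hf, randomizedStationaryError, changeAwareError, show (3 : ℝ) - 1 = 2 by norm_num]
    using stmt_12_general (N := 3) (by norm_num) hp hps hps' hx
end

section
/- Fix 0 < P_AS < P_NS < 1 and an integer n ≥ 1. The distribution π on ℕ defined by π(0) = [1 + (P_NS − P_NS^n)/(1 − P_NS) + P_NS^n/(1 − P_AS)]^{-1}, π(k) = P_NS^k·π(0) for 1 ≤ k ≤ n−1, and π(k) = P_AS^{k−n}·P_NS^n·π(0) for k ≥ n, has nonnegative entries summing to 1 and is invariant under the Markov kernel K_n on ℕ given by: from state k, move to k+1 with probability P_NS if k ≤ n−1 and with probability P_AS if k ≥ n, and otherwise move to 0. (These are eqs. (76)–(77) of the paper: the steady-state distribution of the consecutive-error chain under the wait-then-generate policy.) -/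
/-!
Write `p k` for the probability that the chain moves from `k` to `k + 1` rather than back to `0`.
The only way into `m + 1` is from `m`, so invariance there is the recursion
`π (m + 1) = π m * p m`. Invariance at `0` then follows from summability alone: the flow
`π k * (1 - p k)` equals `π k - π (k + 1)`, which telescopes to `π 0`.
-/

theorem hasSum_sub_succ_of_summable {G : Type*} [AddCommGroup G] [TopologicalSpace G]
    [IsTopologicalAddGroup G] {f : ℕ → G} (hf : Summable f) :
    HasSum (fun k ↦ f k - f (k + 1)) (f 0) := by
  obtain ⟨s, hs⟩ := hf
  have hshift : HasSum (fun k ↦ f (k + 1)) (s - f 0) := by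
    simpa only [Finset.sum_range_one] using (hasSum_nat_add_iff' 1).mpr hs
  simpa only [sub_sub_cancel] using hs.sub hshift

section SuccessRun

variable {R : Type*} [Ring R]

/-- The transition matrix of the success-run chain on `ℕ`: row `k` has entry `p k` at `k + 1` and
the complementary entry `1 - p k` at `0`. Neither `0 ≤ p k` nor `p k ≤ 1` is built in. -/
def successRunKernel (p : ℕ → R) (k m : ℕ) : R :=
  if m = k + 1 then p k else if m = 0 then 1 - p k else 0

theorem successRunKernel_zero_right (p : ℕ → R) (k : ℕ) : successRunKernel p k 0 = 1 - p k := by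
  simp [successRunKernel]

theorem successRunKernel_self_succ (p : ℕ → R) (k : ℕ) : successRunKernel p k (k + 1) = p k :=
  if_pos rfl

theorem successRunKernel_succ_of_ne (p : ℕ → R) {k m : ℕ} (h : k ≠ m) :
    successRunKernel p k (m + 1) = 0 := by
  simp [successRunKernel, h.symm]

theorem hasSum_mul_successRunKernel [TopologicalSpace R] [IsTopologicalAddGroup R]
    {p π : ℕ → R} (hπ : Summable π) (hsucc : ∀ k, π (k + 1) = π k * p k) (m : ℕ) :
    HasSum (fun k ↦ π k * successRunKernel p k m) (π m) := by
  cases m with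
  | zero =>
    simpa only [successRunKernel_zero_right, mul_sub, mul_one, hsucc] using
      hasSum_sub_succ_of_summable hπ
  | succ m =>
    have hsingle := hasSum_single (f := fun k ↦ π k * successRunKernel p k (m + 1)) m
      fun k hk ↦ by rw [successRunKernel_succ_of_ne p hk, mul_zero]
    simpa only [successRunKernel_self_succ, ← hsucc] using hsingle

end SuccessRun

section Threshold

/-- The run-continuation probabilities of the wait-then-generate policy with threshold `n`: an
error occurs with probability `a` while the sampler is idle, and `b` once it samples. -/
def thresholdProb {α : Type*} (a b : α) (n k : ℕ) : α :=
  if k < n then a else b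

/-- The unnormalized stationary distribution of the success-run chain with continuation
probabilities `thresholdProb a b n`, with weight `1` at `0`. Truncated subtraction makes the single
formula cover both regimes. -/
def thresholdWeight {M : Type*} [Monoid M] (a b : M) (n k : ℕ) : M :=
  a ^ min k n * b ^ (k - n)

section Monoid

variable {M : Type*} [Monoid M] (a b : M) {n k : ℕ}

theorem thresholdWeight_zero_right (n : ℕ) : thresholdWeight a b n 0 = 1 := by
  simp [thresholdWeight]

theorem thresholdWeight_of_le (h : k ≤ n) : thresholdWeight a b n k = a ^ k := by
  simp [thresholdWeight, h]

theorem thresholdWeight_of_ge (h : n ≤ k) :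
    thresholdWeight a b n k = a ^ n * b ^ (k - n) := by
  simp [thresholdWeight, h]

theorem thresholdWeight_succ (n k : ℕ) :
    thresholdWeight a b n (k + 1) = thresholdWeight a b n k * thresholdProb a b n k := by
  rcases lt_or_ge k n with h | h
  · rw [thresholdWeight_of_le a b h, thresholdWeight_of_le a b h.le, thresholdProb, if_pos h,
      pow_succ]
  · rw [thresholdWeight_of_ge a b (Nat.le_succ_of_le h), thresholdWeight_of_ge a b h,
      thresholdProb, if_neg h.not_gt, Nat.succ_sub h, pow_succ, mul_assoc]

end Monoid

theorem thresholdWeight_nonneg {R : Type*} [MonoidWithZero R] [Preorder R] [ZeroLEOneClass R]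
    [PosMulMono R] {a b : R} (ha : 0 ≤ a) (hb : 0 ≤ b) (n k : ℕ) :
    0 ≤ thresholdWeight a b n k :=
  mul_nonneg (pow_nonneg ha _) (pow_nonneg hb _)

theorem geom_sum_eq_one_add_div {K : Type*} [DivisionRing K] {a : K} (ha : a ≠ 1) (n : ℕ) :
    ∑ k ∈ Finset.range n, a ^ k = 1 + (a - a ^ n) / (1 - a) := by
  rw [geom_sum_eq ha, one_add_div (sub_ne_zero.mpr ha.symm), sub_add_sub_cancel,
    ← neg_div_neg_eq, neg_sub, neg_sub]

theorem hasSum_thresholdWeight {K : Type*} [NormedDivisionRing K] {a b : K} (ha : a ≠ 1)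
    (hb : ‖b‖ < 1) (n : ℕ) :
    HasSum (thresholdWeight a b n) (1 + (a - a ^ n) / (1 - a) + a ^ n / (1 - b)) := by
  have hhead : ∑ k ∈ Finset.range n, thresholdWeight a b n k = 1 + (a - a ^ n) / (1 - a) := by
    rw [← geom_sum_eq_one_add_div ha]
    exact Finset.sum_congr rfl fun k hk ↦ thresholdWeight_of_le a b (Finset.mem_range.mp hk).le
  have htail : HasSum (fun k ↦ thresholdWeight a b n (k + n)) (a ^ n / (1 - b)) := by
    simpa only [thresholdWeight_of_ge a b (Nat.le_add_left n _), Nat.add_sub_cancel,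
      div_eq_mul_inv] using (hasSum_geometric_of_norm_lt_one hb).mul_left (a ^ n)
  simpa only [hhead] using htail.sum_range_add

theorem one_le_sum_thresholdWeight {a b : ℝ} (ha : 0 ≤ a) (ha' : a ≠ 1) (hb : 0 ≤ b)
    (hb' : b < 1) (n : ℕ) : 1 ≤ 1 + (a - a ^ n) / (1 - a) + a ^ n / (1 - b) := by
  have hsum := hasSum_thresholdWeight ha' (by rwa [Real.norm_of_nonneg hb]) n
  simpa only [thresholdWeight_zero_right] using
    le_hasSum hsum 0 fun k _ ↦ thresholdWeight_nonneg ha hb n k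

end Threshold

theorem stmt_17_general (PAS PNS : ℝ) (hPAS : 0 ≤ PAS) (hPAS' : PAS < 1) (hPNS : 0 ≤ PNS)
    (hPNS' : PNS ≠ 1) (n : ℕ) (hn : 1 ≤ n)
    (c : ℝ)
    (hc : c = (1 + (PNS - PNS ^ n) / (1 - PNS) + PNS ^ n / (1 - PAS))⁻¹)
    (pi : ℕ → ℝ)
    (hpi0 : pi 0 = c)
    (hpi1 : ∀ k, 1 ≤ k → k ≤ n - 1 → pi k = PNS ^ k * c)
    (hpi2 : ∀ k, n ≤ k → pi k = PAS ^ (k - n) * PNS ^ n * c)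
    (K : ℕ → ℕ → ℝ)
    (hK : ∀ k m, K k m =
      if k ≤ n - 1 then
        (if m = k + 1 then PNS else if m = 0 then 1 - PNS else 0)
      else
        (if m = k + 1 then PAS else if m = 0 then 1 - PAS else 0)) :
    (∀ k, 0 ≤ pi k) ∧ HasSum pi 1 ∧ ∀ m, HasSum (fun k ↦ pi k * K k m) (pi m) := by
  have hpi (k : ℕ) : pi k = thresholdWeight PNS PAS n k * c := by
    rcases lt_or_ge k n with hk | hk
    · rw [thresholdWeight_of_le _ _ hk.le]
      rcases k.eq_zero_or_pos with rfl | hk0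
      · rw [hpi0, pow_zero, one_mul]
      · exact hpi1 k hk0 (Nat.le_sub_one_of_lt hk)
    · rw [hpi2 k hk, thresholdWeight_of_ge _ _ hk, mul_comm (PAS ^ (k - n))]
  have hK' (k m : ℕ) : K k m = successRunKernel (thresholdProb PNS PAS n) k m := by
    simp only [hK, successRunKernel, thresholdProb, Nat.le_sub_one_iff_lt hn]
    split_ifs <;> rfl
  have hmass := zero_lt_one.trans_le (one_le_sum_thresholdWeight hPNS hPNS' hPAS hPAS' n)
  have hnonneg (k : ℕ) : 0 ≤ pi k := by
    rw [hpi, hc]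
    exact mul_nonneg (thresholdWeight_nonneg hPNS hPAS n k) (inv_nonneg.mpr hmass.le)
  have hsum : HasSum pi 1 := by
    have hweight := hasSum_thresholdWeight hPNS' (by rwa [Real.norm_of_nonneg hPAS]) n
    rw [funext hpi]
    simpa only [hc, mul_inv_cancel₀ hmass.ne'] using hweight.mul_right c
  refine ⟨hnonneg, hsum, fun m ↦ ?_⟩
  simp only [hK']
  refine hasSum_mul_successRunKernel hsum.summable (fun k ↦ ?_) m
  rw [hpi, hpi, thresholdWeight_succ, mul_right_comm]

/-- Eqs. (76)–(77) of the paper: the steady-state distribution of the consecutive-error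
chain under the wait-then-generate policy with threshold n. -/
theorem stmt_17 (PAS PNS : ℝ) (h1 : 0 < PAS) (h2 : PAS < PNS) (h3 : PNS < 1)
    (n : ℕ) (hn : 1 ≤ n)
    (c : ℝ)
    (hc : c = (1 + (PNS - PNS ^ n) / (1 - PNS) + PNS ^ n / (1 - PAS))⁻¹)
    (pi : ℕ → ℝ)
    (hpi0 : pi 0 = c)
    (hpi1 : ∀ k, 1 ≤ k → k ≤ n - 1 → pi k = PNS ^ k * c)
    (hpi2 : ∀ k, n ≤ k → pi k = PAS ^ (k - n) * PNS ^ n * c)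
    (K : ℕ → ℕ → ℝ)
    (hK : ∀ k m, K k m =
      if k ≤ n - 1 then
        (if m = k + 1 then PNS else if m = 0 then 1 - PNS else 0)
      else
        (if m = k + 1 then PAS else if m = 0 then 1 - PAS else 0)) :
    (∀ k, 0 ≤ pi k) ∧ (∑' k : ℕ, pi k = 1) ∧
      (∀ m, ∑' k : ℕ, pi k * K k m = pi m) := by
  obtain ⟨hnonneg, hsum, hinv⟩ := stmt_17_general PAS PNS h1.le (h2.trans h3) (h1.trans h2).le
    h3.ne n hn c hc pi hpi0 hpi1 hpi2 K hK
  exact ⟨hnonneg, hsum.tsum_eq, fun m ↦ (hinv m).tsum_eq⟩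
end

section
/- Fix 0 < P_AS < P_NS < 1 and η ∈ (0,1). For n ∈ ℕ define T(n) = [P_NS^n/(1 − P_AS)] · [1 + (P_NS − P_NS^n)/(1 − P_NS) + P_NS^n/(1 − P_AS)]^{-1}. Then T(n) ≤ η if and only if n ≥ L, where L = ln( η(1 − P_AS) / (1 − (1−η)P_NS − η·P_AS) ) / ln(P_NS); consequently the least natural number n with T(n) ≤ η is n* = ⌈L⌉. (This is the paper's Lemma 5: the optimal threshold of the wait-then-generate policy is n* = ⌈log_{P_NS}( η(1−P_AS)/(1−(1−η)P_NS−η·P_AS) )⌉; note 1 − (1−η)P_NS − η·P_AS > 0 and the argument of the logarithm lies in (0,1], so L ≥ 0.) -/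
/-!
Put `x = P_NS ^ n`, `u = 1 - P_AS` and `v = 1 - P_NS`. Clearing denominators turns `T(n)` into
`x v / ((1 - x) u + x v)`, a share whose odds are `x v : (1 - x) u`. Comparing them with the odds
`η : 1 - η` makes `T(n) ≤ η` linear in `x`, namely `x ≤ η u / ((1 - η) v + η u)`, and the logarithm
to the base `P_NS < 1` reverses this into a lower bound on `n`.
-/

/-- The long-run fraction `T(n)` of time slots in which the wait-then-generate policy with threshold
`n` samples, where `a` and `p` are the average errors `P_AS` and `P_NS`. -/
def samplingFraction {K : Type*} [Field K] (a p : K) (n : ℕ) : K :=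
  (p ^ n / (1 - a)) * (1 + (p - p ^ n) / (1 - p) + p ^ n / (1 - a))⁻¹

theorem samplingFraction_eq_div {K : Type*} [Field K] {a p : K} (ha : 1 - a ≠ 0) (hp : 1 - p ≠ 0)
    (n : ℕ) :
    samplingFraction a p n = p ^ n * (1 - p) / ((1 - p ^ n) * (1 - a) + p ^ n * (1 - p)) := by
  have cycle_eq : 1 + (p - p ^ n) / (1 - p) + p ^ n / (1 - a) =
      ((1 - p ^ n) * (1 - a) + p ^ n * (1 - p)) / ((1 - p) * (1 - a)) := by
    generalize p ^ n = x
    field_simp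
    ring
  rw [samplingFraction, cycle_eq, inv_div, div_mul_div_comm, ← mul_assoc, mul_comm (1 - a),
    mul_div_mul_right _ _ ha]

section OrderedField

variable {K : Type*} [Field K] [LinearOrder K] [IsStrictOrderedRing K]

theorem mul_div_convexCombination_le_iff {x u v η : K} (hx : 0 < (1 - x) * u + x * v)
    (hη : 0 < (1 - η) * v + η * u) :
    x * v / ((1 - x) * u + x * v) ≤ η ↔ x ≤ η * u / ((1 - η) * v + η * u) := by
  rw [div_le_iff₀ hx, le_div_iff₀ hη]
  constructor <;> intro h <;> linarith

theorem samplingFraction_le_iff_pow_le {a p η : K} (ha : a < 1) (hp₀ : 0 ≤ p) (hp₁ : p < 1)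
    (hD : 0 < 1 - (1 - η) * p - η * a) (n : ℕ) :
    samplingFraction a p n ≤ η ↔ p ^ n ≤ η * (1 - a) / (1 - (1 - η) * p - η * a) := by
  have ha' : 0 < 1 - a := sub_pos.2 ha
  have hp' : 0 < 1 - p := sub_pos.2 hp₁
  have denom_pos : 0 < (1 - p ^ n) * (1 - a) + p ^ n * (1 - p) :=
    convex_Ioi (0 : K) ha' hp' (sub_nonneg.2 (pow_le_one₀ hp₀ hp₁.le)) (pow_nonneg hp₀ n)
      (sub_add_cancel 1 _)
  have cutoff_denom : 1 - (1 - η) * p - η * a = (1 - η) * (1 - p) + η * (1 - a) := by ring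
  rw [cutoff_denom] at hD ⊢
  rw [samplingFraction_eq_div ha'.ne' hp'.ne', mul_div_convexCombination_le_iff denom_pos hD]

end OrderedField

theorem stmt_18_general {a p η : ℝ} (ha : a < 1) (hp₀ : 0 < p) (hp₁ : p < 1) (hη : 0 < η)
    (hD : 0 < 1 - (1 - η) * p - η * a) :
    (∀ n : ℕ, samplingFraction a p n ≤ η ↔
      Real.logb p (η * (1 - a) / (1 - (1 - η) * p - η * a)) ≤ n) ∧
    IsLeast {n : ℕ | samplingFraction a p n ≤ η}
      ⌈Real.logb p (η * (1 - a) / (1 - (1 - η) * p - η * a))⌉₊ := by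
  have cutoff_pos : 0 < η * (1 - a) / (1 - (1 - η) * p - η * a) :=
    div_pos (mul_pos hη (sub_pos.2 ha)) hD
  have le_iff (n : ℕ) : samplingFraction a p n ≤ η ↔
      Real.logb p (η * (1 - a) / (1 - (1 - η) * p - η * a)) ≤ n := by
    rw [samplingFraction_le_iff_pow_le ha hp₀.le hp₁ hD,
      Real.logb_le_iff_le_rpow_of_base_lt_one hp₀ hp₁ cutoff_pos, Real.rpow_natCast]
  exact ⟨le_iff, by simpa only [le_iff] using Nat.gc_ceil_coe.isLeast_l⟩

/-- Lemma 5 of the paper: the sampling-cost constraint T(n) ≤ η holds iff n ≥ L, and the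
optimal threshold of the wait-then-generate policy is n* = ⌈L⌉, where
L = log_{P_NS}( η(1−P_AS)/(1−(1−η)P_NS−η·P_AS) ). -/
theorem stmt_18 (PAS PNS η : ℝ) (h1 : 0 < PAS) (h2 : PAS < PNS) (h3 : PNS < 1)
    (hη : 0 < η) (hη' : η < 1)
    (T : ℕ → ℝ)
    (hT : ∀ n, T n = (PNS ^ n / (1 - PAS)) *
      (1 + (PNS - PNS ^ n) / (1 - PNS) + PNS ^ n / (1 - PAS))⁻¹)
    (L : ℝ)
    (hL : L = Real.log (η * (1 - PAS) / (1 - (1 - η) * PNS - η * PAS)) / Real.log PNS) :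
    (∀ n : ℕ, T n ≤ η ↔ L ≤ (n : ℝ)) ∧ IsLeast {n : ℕ | T n ≤ η} ⌈L⌉₊ := by
  rw [show T = samplingFraction PAS PNS from funext hT, hL, Real.log_div_log]
  exact stmt_18_general (h2.trans h3) (h1.trans h2) h3 hη (by linarith [mul_pos hη (sub_pos.2 h2)])
end
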